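/- Let μ be a probability measure on ℝ^d, let k(z, z') = ∫ cos(⟨v, z − z'⟩) dμ(v), let W be a measurable space with probability measure p, let g : W × X → ℝ^d be measurable, and fix inputs x₁,…,xₙ ∈ X. Let K_{ij} = ∫∫ k(g(w,x_i), g(w',x_j)) dp(w) dp(w'). Let ((v₁,b₁),…,(v_q,b_q)) be i.i.d. with v_l ∼ μ and b_l ∼ Unif[0, 2π], and define the n×q random matrix R with entries R_{il} = ∫ √(2/q) cos(⟨v_l, g(w,x_i)⟩ + b_l) dp(w). Then for each i, j, the expectation over the samples (v₁,b₁),…,(v_q,b_q) of the (i,j) entry of R Rᵀ equals K_{ij}, i.e., E[(R Rᵀ)_{ij}] = K_{ij}. (This is the unbiasedness of the Random Fourier Features linear-kernel approximation K ≃ R Rᵀ of Proposition 2.) -/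

import Mathlib

open scoped InnerProductSpace
open MeasureTheory Real Matrix

/-- The uniform distribution on `[0, 2π]` is a probability measure. -/
lemma isProbabilityMeasure_uniform_Icc_two_pi :
    IsProbabilityMeasure
      ((ENNReal.ofReal (2 * π))⁻¹ • volume.restrict (Set.Icc 0 (2 * π)) : Measure ℝ) := by
  constructor
  simp only [Measure.smul_apply, Measure.restrict_apply_univ, Real.volume_Icc, sub_zero,
    smul_eq_mul]
  exact ENNReal.inv_mul_cancel (by simpa using pi_pos) ENNReal.ofReal_ne_top

/-- Averaging over a uniform random phase turns a product of cosines into the cosine of the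
difference. -/
lemma integral_cos_add_mul_cos_add_uniform (a a' : ℝ) :
    ∫ b, cos (a + b) * cos (a' + b)
        ∂((ENNReal.ofReal (2 * π))⁻¹ • volume.restrict (Set.Icc 0 (2 * π)) : Measure ℝ)
      = cos (a - a') / 2 := by
  have hpos : 0 < 2 * π := two_pi_pos
  have hprod : ∀ b, cos (a + b) * cos (a' + b)
      = cos (a - a') / 2 + cos (2 * b + (a + a')) / 2 := by
    intro b
    have h := two_mul_cos_mul_cos (a + b) (a' + b)
    rw [show a + b - (a' + b) = a - a' by ring,
      show a + b + (a' + b) = 2 * b + (a + a') by ring] at h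
    linarith
  have hosc : ∫ b in (0 : ℝ)..(2 * π), cos (2 * b + (a + a')) = 0 := by
    rw [intervalIntegral.integral_comp_mul_add cos two_ne_zero, integral_cos,
      show 2 * (2 * π) + (a + a') = (2 * 0 + (a + a')) + 2 * π + 2 * π by ring,
      sin_add_two_pi, sin_add_two_pi, sub_self, smul_zero]
  rw [integral_smul_measure, integral_Icc_eq_integral_Ioc,
    ← intervalIntegral.integral_of_le hpos.le]
  simp_rw [hprod]
  rw [intervalIntegral.integral_add (by simp)
    (Continuous.intervalIntegrable (by fun_prop) _ _), intervalIntegral.integral_div,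
    intervalIntegral.integral_div, hosc, intervalIntegral.integral_const, ENNReal.toReal_inv,
    ENNReal.toReal_ofReal hpos.le]
  simp only [smul_eq_mul]
  field_simp
  ring

/-- The second moment of a pair of averaged random Fourier features is half of the averaged
kernel. -/
lemma integral_averaged_rff_mul
    {E W : Type*} [NormedAddCommGroup E] [InnerProductSpace ℝ E] [MeasurableSpace E]
    [BorelSpace E] [SecondCountableTopology E] [MeasurableSpace W]
    (μ : Measure E) [IsProbabilityMeasure μ] (p : Measure W) [IsProbabilityMeasure p]
    {φ ψ : W → E} (hφ : Measurable φ) (hψ : Measurable ψ) :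
    ∫ t, (∫ w, cos (⟪t.1, φ w⟫_ℝ + t.2) ∂p) * (∫ w, cos (⟪t.1, ψ w⟫_ℝ + t.2) ∂p)
        ∂(μ.prod ((ENNReal.ofReal (2 * π))⁻¹ • volume.restrict (Set.Icc 0 (2 * π))))
      = (∫ w, ∫ w', ∫ v, cos ⟪v, φ w - ψ w'⟫_ℝ ∂μ ∂p ∂p) / 2 := by
  have := isProbabilityMeasure_uniform_Icc_two_pi
  have hbound : ∀ a a' : ℝ, ‖cos a * cos a'‖ ≤ 1 := fun a a' => by
    rw [norm_mul]
    exact mul_le_one₀ (abs_cos_le_one a) (norm_nonneg _) (abs_cos_le_one a')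
  have hphase : ∀ w w', ∫ t : E × ℝ, cos (⟪t.1, φ w⟫_ℝ + t.2) * cos (⟪t.1, ψ w'⟫_ℝ + t.2)
        ∂(μ.prod ((ENNReal.ofReal (2 * π))⁻¹ • volume.restrict (Set.Icc 0 (2 * π))))
      = (∫ v, cos ⟪v, φ w - ψ w'⟫_ℝ ∂μ) / 2 := by
    intro w w'
    rw [integral_prod _ (.of_bound (by fun_prop) 1 (.of_forall fun _ => hbound _ _))]
    simp_rw [integral_cos_add_mul_cos_add_uniform, ← inner_sub_right]
    rw [integral_div]
  have hker : Integrable (fun z : W × W => (∫ v, cos ⟪v, φ z.1 - ψ z.2⟫_ℝ ∂μ) / 2)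
      (p.prod p) := by
    refine Integrable.div_const (.of_bound (C := 1) ?_ (.of_forall fun z => ?_)) 2
    · refine (StronglyMeasurable.integral_prod_right
        (f := fun (z : W × W) (v : E) => cos ⟪v, φ z.1 - ψ z.2⟫_ℝ) ?_).aestronglyMeasurable
      exact Measurable.stronglyMeasurable (by fun_prop)
    · simpa using norm_integral_le_of_norm_le_const (μ := μ) (C := 1)
        (f := fun v => cos ⟪v, φ z.1 - ψ z.2⟫_ℝ) (.of_forall fun v => abs_cos_le_one _)
  simp_rw [← integral_prod_mul (μ := p) (ν := p)]
  rw [integral_integral_swap (.of_bound (Measurable.aestronglyMeasurable (by fun_prop)) 1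
    (.of_forall fun _ => hbound _ _))]
  simp_rw [hphase]
  rw [integral_prod _ hker]
  simp_rw [integral_div]

/-- Unbiasedness of the Random Fourier Features approximation `K ≃ R Rᵀ` of
Proposition 2: if `K i j = ∫∫ k(g(w, xᵢ), g(w', xⱼ)) dp(w) dp(w')` for a
shift-invariant kernel `k(z,z') = ∫ cos ⟪v, z - z'⟫ dμ(v)`, and the random matrix
`R` built from `q` i.i.d. samples `(vₗ, bₗ) ∼ μ × Unif[0, 2π]` has entries
`R i l = ∫ √(2/q) cos(⟪vₗ, g(w, xᵢ)⟫ + bₗ) dp(w)`, then `E[(R Rᵀ) i j] = K i j`. -/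
theorem rff_linear_kernel_unbiased
    {d : ℕ} (μ : Measure (EuclideanSpace ℝ (Fin d))) [IsProbabilityMeasure μ]
    (k : EuclideanSpace ℝ (Fin d) → EuclideanSpace ℝ (Fin d) → ℝ)
    (hk : ∀ z z', k z z' = ∫ v, cos ⟪v, z - z'⟫_ℝ ∂μ)
    {W X : Type*} [MeasurableSpace W] [MeasurableSpace X]
    (p : Measure W) [IsProbabilityMeasure p]
    (g : W × X → EuclideanSpace ℝ (Fin d)) (hg : Measurable g)
    {n : ℕ} (x : Fin n → X)
    (K : Matrix (Fin n) (Fin n) ℝ)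
    (hK : ∀ i j, K i j = ∫ w, ∫ w', k (g (w, x i)) (g (w', x j)) ∂p ∂p)
    {q : ℕ} (hq : 0 < q)
    -- `unif` is the uniform probability distribution on `[0, 2π]`
    (unif : Measure ℝ)
    (hunif : unif = (ENNReal.ofReal (2 * π))⁻¹ • volume.restrict (Set.Icc 0 (2 * π)))
    (R : (Fin q → EuclideanSpace ℝ (Fin d) × ℝ) → Matrix (Fin n) (Fin q) ℝ)
    (hR : ∀ s i l, R s i l
      = ∫ w, Real.sqrt (2 / q) * cos (⟪(s l).1, g (w, x i)⟫_ℝ + (s l).2) ∂p) :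
    ∀ i j, (∫ s, (R s * (R s)ᵀ) i j ∂(Measure.pi fun _ : Fin q => μ.prod unif))
      = K i j := by
  intro i j
  subst hunif
  have := isProbabilityMeasure_uniform_Icc_two_pi
  have hgx : ∀ i, Measurable fun w => g (w, x i) := fun i =>
    hg.comp (measurable_id.prodMk measurable_const)
  set F : Fin n → EuclideanSpace ℝ (Fin d) × ℝ → ℝ :=
    fun i t => ∫ w, cos (⟪t.1, g (w, x i)⟫_ℝ + t.2) ∂p with hF
  have hFm : ∀ i, StronglyMeasurable (F i) := fun i => by
    have hgi := hgx i
    refine StronglyMeasurable.integral_prod_right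
      (f := fun (t : EuclideanSpace ℝ (Fin d) × ℝ) (w : W) =>
        cos (⟪t.1, g (w, x i)⟫_ℝ + t.2)) ?_
    exact Measurable.stronglyMeasurable (by fun_prop)
  have hFb : ∀ i t, ‖F i t‖ ≤ 1 := fun i t => by
    simpa using norm_integral_le_of_norm_le_const (μ := p) (C := 1)
      (f := fun w => cos (⟪t.1, g (w, x i)⟫_ℝ + t.2)) (.of_forall fun w => abs_cos_le_one _)
  have hFF : StronglyMeasurable fun t => F i t * F j t := (hFm i).mul (hFm j)
  have hentry : ∀ s, (R s * (R s)ᵀ) i j = ∑ l, (2 / q : ℝ) * (F i (s l) * F j (s l)) := by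
    intro s
    simp only [Matrix.mul_apply, Matrix.transpose_apply, hR, integral_const_mul, hF]
    refine Finset.sum_congr rfl fun l _ => ?_
    rw [mul_mul_mul_comm, Real.mul_self_sqrt (by positivity)]
  simp_rw [hentry]
  have hint : ∀ l ∈ Finset.univ, Integrable
      (fun s : Fin q → EuclideanSpace ℝ (Fin d) × ℝ => (2 / q : ℝ) * (F i (s l) * F j (s l)))
      (Measure.pi fun _ : Fin q => μ.prod
        ((ENNReal.ofReal (2 * π))⁻¹ • volume.restrict (Set.Icc 0 (2 * π)))) := fun l _ =>
    Integrable.const_mul (.of_bound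
      (hFF.comp_measurable (measurable_pi_apply l)).aestronglyMeasurable 1
      (.of_forall fun s => by
        simp only [Function.comp_apply, norm_mul]
        exact mul_le_one₀ (hFb i _) (norm_nonneg _) (hFb j _))) _
  rw [integral_finsetSum _ hint]
  simp_rw [integral_const_mul]
  have hmarginal := fun l : Fin q => integral_comp_eval
    (μ := fun _ : Fin q => μ.prod
      ((ENNReal.ofReal (2 * π))⁻¹ • volume.restrict (Set.Icc 0 (2 * π)) : Measure ℝ))
    (i := l) hFF.aestronglyMeasurable
  simp_rw [hmarginal, hF]
  rw [integral_averaged_rff_mul μ p (hgx i) (hgx j), hK]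
  simp_rw [hk]
  have hq' : (q : ℝ) ≠ 0 := by positivity
  rw [Finset.sum_const, Finset.card_univ, Fintype.card_fin, nsmul_eq_mul]
  field_simp
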